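/- Let F be a field of characteristic different from 2, let Φ ∈ M_n(F) be symmetric and invertible, and let σ be the involution on M_n(F) given by σ(X) = ΦXᵀΦ⁻¹. The following are equivalent: (a) for every U ∈ M_n(F) with σ(U) = U, one has [tr(σ(X)UX) ≥_P 0 for every X ∈ M_n(F) and every field ordering P of F] if and only if [there exist finitely many X_1, ..., X_N ∈ M_n(F) with U = Σ_{i=1}^{N} σ(X_i)X_i]; (b) at every field ordering P of F, the matrix Φ is positive definite or negative definite at P. -/

import Mathlib

open Matrix BigOperators

/-- A field ordering of `F`, given by its cone of nonnegative elements.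
This is equivalent to a linear order making `F` a linearly ordered field. -/
structure FieldOrdering (F : Type*) [Field F] where
  nonneg : F → Prop
  add_nonneg : ∀ {x y : F}, nonneg x → nonneg y → nonneg (x + y)
  mul_nonneg : ∀ {x y : F}, nonneg x → nonneg y → nonneg (x * y)
  total : ∀ x : F, nonneg x ∨ nonneg (-x)
  eq_zero_of : ∀ {x : F}, nonneg x → nonneg (-x) → x = 0

/-- `x >_P 0`. -/
def FieldOrdering.pos {F : Type*} [Field F] (P : FieldOrdering F) (x : F) : Prop :=
  P.nonneg x ∧ x ≠ 0

/-- A matrix is positive semidefinite at an ordering `P` if `xᵀMx ≥_P 0` for all `x`. -/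
def Matrix.IsPSDAt {F : Type*} [Field F] {n : ℕ} (P : FieldOrdering F)
    (M : Matrix (Fin n) (Fin n) F) : Prop :=
  ∀ x : Fin n → F, P.nonneg (x ⬝ᵥ (M *ᵥ x))

/-- A matrix is positive definite at an ordering `P` if `xᵀMx >_P 0` for all `x ≠ 0`. -/
def Matrix.IsPDAt {F : Type*} [Field F] {n : ℕ} (P : FieldOrdering F)
    (M : Matrix (Fin n) (Fin n) F) : Prop :=
  ∀ x : Fin n → F, x ≠ 0 → P.pos (x ⬝ᵥ (M *ᵥ x))

/-!
Write `U = Φ S` with `S` symmetric. Then `tr(σ(X) U X) = tr(Φ Xᵀ S X)`, and `U` is a sum of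
elements `σ(X) X = Φ (Xᵀ Φ⁻¹ X)` exactly when `S` is a sum of congruences `Xᵀ Φ⁻¹ X`. Diagonalizing
one of two symmetric forms `A`, `B` shows that `tr(A Xᵀ B X)` is nonnegative for all `X` if and only
if all products `A(x) B(y)` of values of the forms are nonnegative.

For `U = 1` this says that `tr(σ(X) X)` is nonnegative at `P` if and only if `Φ` is definite at `P`.
For general `U`, fix `w` with `c = Φ(w) ≠ 0`. Every `c S(y)` is nonnegative at all orderings, hence
a sum of squares by Artin's theorem, so diagonalizing `S` writes it as a sum of rank-one matrices
`(a² / c) g gᵀ`. Each of these is `Xᵀ Φ⁻¹ X` for `X = (a / c) (Φ w) gᵀ`.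
-/

namespace FieldOrdering

variable {F : Type*} [Field F] (P : FieldOrdering F)

lemma mul_self_nonneg (x : F) : P.nonneg (x * x) := by
  rcases P.total x with h | h
  · exact P.mul_nonneg h h
  · simpa using P.mul_nonneg h h

lemma zero_nonneg : P.nonneg 0 := by
  simpa using P.mul_self_nonneg 0

lemma sum_nonneg {ι : Type*} {s : Finset ι} {f : ι → F} (h : ∀ i ∈ s, P.nonneg (f i)) :
    P.nonneg (∑ i ∈ s, f i) :=
  Finset.sum_induction f P.nonneg (fun _ _ => P.add_nonneg) P.zero_nonneg h

lemma not_neg_one_nonneg (P : FieldOrdering F) : ¬ P.nonneg (-1) := fun h =>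
  one_ne_zero (P.eq_zero_of (by simpa using P.mul_self_nonneg 1) h)

lemma two_ne_zero (P : FieldOrdering F) : (2 : F) ≠ 0 := fun h =>
  P.not_neg_one_nonneg <| by
    rw [show (-1 : F) = 1 * 1 by linear_combination -h]
    exact P.mul_self_nonneg 1

lemma neg_nonneg_of_mul_nonneg {a b : F} (ha : ¬ P.nonneg a) (hab : P.nonneg (a * b)) :
    P.nonneg (-b) := by
  rcases P.total b with hb | hb
  · have hab' : P.nonneg (-(a * b)) := by
      simpa using P.mul_nonneg ((P.total a).resolve_left ha) hb
    rcases mul_eq_zero.1 (P.eq_zero_of hab hab') with rfl | rfl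
    · exact absurd P.zero_nonneg ha
    · simpa using P.zero_nonneg
  · exact hb

/-- The field ordering whose cone of nonnegative elements is a total preordering. -/
def ofRingPreordering (T : RingPreordering F) (hT : ∀ x, x ∈ T ∨ -x ∈ T) : FieldOrdering F where
  nonneg x := x ∈ T
  add_nonneg := add_mem
  mul_nonneg := mul_mem
  total := hT
  eq_zero_of := RingPreordering.eq_zero_of_mem_of_neg_mem

end FieldOrdering

section Artin

variable {F : Type*} [Field F]

/-- The preordering `T + a T` generated by a preordering `T` of a field and an element `a` whose
negative is not in `T`. -/
def preorderingAdjoin (T : RingPreordering F) (a : F) (ha : -a ∉ T) : RingPreordering F where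
  carrier := {z | ∃ s ∈ T, ∃ t ∈ T, z = s + a * t}
  zero_mem' := ⟨0, zero_mem T, 0, zero_mem T, by simp⟩
  one_mem' := ⟨1, one_mem T, 0, zero_mem T, by simp⟩
  add_mem' := by
    rintro _ _ ⟨s, hs, t, ht, rfl⟩ ⟨s', hs', t', ht', rfl⟩
    exact ⟨s + s', add_mem hs hs', t + t', add_mem ht ht', by ring⟩
  mul_mem' := by
    rintro _ _ ⟨s, hs, t, ht, rfl⟩ ⟨s', hs', t', ht', rfl⟩
    exact ⟨s * s' + a * a * (t * t'),
      add_mem (mul_mem hs hs') (mul_mem (T.mul_self_mem a) (mul_mem ht ht')),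
      s * t' + s' * t, add_mem (mul_mem hs ht') (mul_mem hs' ht), by ring⟩
  mem_of_isSquare' hx := ⟨_, T.mem_of_isSquare hx, 0, zero_mem T, by simp⟩
  neg_one_notMem' := by
    rintro ⟨s, hs, t, ht, h⟩
    rcases eq_or_ne t 0 with rfl | ht0
    · exact T.neg_one_notMem (by simpa [h] using hs)
    · have hneg : -a = (1 + s) * t⁻¹ := by
        field_simp
        linear_combination h
      exact ha (hneg ▸ mul_mem (add_mem (one_mem T) hs) (RingPreordering.inv_mem ht))

lemma le_preorderingAdjoin (T : RingPreordering F) (a : F) (ha : -a ∉ T) :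
    T ≤ preorderingAdjoin T a ha :=
  fun s hs => ⟨s, hs, 0, zero_mem T, by simp⟩

lemma mem_preorderingAdjoin (T : RingPreordering F) (a : F) (ha : -a ∉ T) :
    a ∈ preorderingAdjoin T a ha :=
  ⟨0, zero_mem T, 1, one_mem T, by simp⟩

lemma mem_or_neg_mem_of_isMax {T : RingPreordering F} (hT : IsMax T) (a : F) :
    a ∈ T ∨ -a ∈ T := by
  by_contra! h
  exact h.1 (hT (le_preorderingAdjoin T a h.2) (mem_preorderingAdjoin T a h.2))

lemma exists_le_isMax_preordering {R : Type*} [CommRing R] (T : RingPreordering R) :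
    ∃ M, T ≤ M ∧ IsMax M := by
  refine zorn_le_nonempty_Ici₀ T (fun c _ hc S hS => ?_) T le_rfl
  have mem_sSup {x : R} :
      x ∈ sSup (RingPreordering.toSubsemiring '' c) ↔ ∃ S' ∈ c, x ∈ S' := by
    have hdir : DirectedOn (· ≤ ·) (RingPreordering.toSubsemiring '' c) :=
      directedOn_image.2 hc.directedOn
    simp [Subsemiring.mem_sSup_of_directedOn (Set.Nonempty.image _ ⟨S, hS⟩) hdir]
  let union : RingPreordering R :=
    { sSup (RingPreordering.toSubsemiring '' c) with
      mem_of_isSquare' := fun hx => mem_sSup.2 ⟨S, hS, S.mem_of_isSquare hx⟩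
      neg_one_notMem' := fun h =>
        let ⟨S', _, hmem⟩ := mem_sSup.1 h
        S'.neg_one_notMem hmem }
  exact ⟨union, fun S' hS' x hx => mem_sSup.2 ⟨S', hS', hx⟩⟩

lemma exists_fieldOrdering_of_preordering (T : RingPreordering F) :
    ∃ P : FieldOrdering F, ∀ x ∈ T, P.nonneg x := by
  obtain ⟨M, hTM, hM⟩ := exists_le_isMax_preordering T
  exact ⟨.ofRingPreordering M (mem_or_neg_mem_of_isMax hM), hTM⟩

lemma isSumSq_of_isSumSq_neg_one (h2 : (2 : F) ≠ 0) (h : IsSumSq (-1 : F)) (a : F) :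
    IsSumSq a := by
  have ha : a = (a + 1) / 2 * ((a + 1) / 2) + -1 * ((a - 1) / 2 * ((a - 1) / 2)) := by
    field_simp
    ring
  rw [ha]
  exact (IsSumSq.mul_self _).add (h.mul (IsSumSq.mul_self _))

theorem isSumSq_of_forall_nonneg (h2 : (2 : F) ≠ 0) {a : F}
    (h : ∀ P : FieldOrdering F, P.nonneg a) : IsSumSq a := by
  by_contra ha
  let sumSq : RingPreordering F :=
    { Subsemiring.sumSq F with
      mem_of_isSquare' := fun hx => Subsemiring.mem_sumSq.2 hx.isSumSq
      neg_one_notMem' := fun h1 =>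
        ha (isSumSq_of_isSumSq_neg_one h2 (Subsemiring.mem_sumSq.1 h1) a) }
  have ha' : - -a ∉ sumSq := fun hmem =>
    ha (Subsemiring.mem_sumSq.1 (by rwa [neg_neg] at hmem))
  obtain ⟨P, hP⟩ := exists_fieldOrdering_of_preordering (preorderingAdjoin sumSq (-a) ha')
  have ha0 : a = 0 := P.eq_zero_of (h P) (hP _ (mem_preorderingAdjoin sumSq (-a) ha'))
  exact ha (ha0 ▸ IsSumSq.zero)

end Artin

section VecMulVec

variable {R : Type*} [CommSemiring R] {k m : Type*} [Fintype k]

lemma transpose_vecMulVec_mul_mul_vecMulVec (B : Matrix k k R) (v : k → R) (g : m → R) :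
    (vecMulVec v g)ᵀ * B * vecMulVec v g = (v ⬝ᵥ B *ᵥ v) • vecMulVec g g := by
  rw [transpose_vecMulVec, vecMulVec_mul, vecMulVec_mul_vecMulVec, vecMulVec_smul,
    dotProduct_mulVec]

variable [Fintype m]

lemma trace_mul_transpose_vecMulVec_mul (A : Matrix m m R) (B : Matrix k k R)
    (x : m → R) (y : k → R) :
    (A * (vecMulVec y x)ᵀ * B * vecMulVec y x).trace = (x ⬝ᵥ A *ᵥ x) * (y ⬝ᵥ B *ᵥ y) := by
  rw [transpose_vecMulVec, mul_vecMulVec A, vecMulVec_mul, vecMulVec_mul_vecMulVec,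
    trace_vecMulVec, dotProduct_smul, smul_eq_mul, mul_comm, dotProduct_comm, dotProduct_mulVec y]

lemma trace_vecMulVec_self_mul_transpose_mul (g : m → R) (B : Matrix k k R) (X : Matrix k m R) :
    (vecMulVec g g * Xᵀ * B * X).trace = (X *ᵥ g) ⬝ᵥ B *ᵥ (X *ᵥ g) := by
  rw [vecMulVec_mul, vecMulVec_mul, vecMulVec_mul, trace_vecMulVec, vecMul_transpose,
    dotProduct_comm, ← dotProduct_mulVec, ← dotProduct_mulVec]

end VecMulVec

section SymmetricMatrix

variable {F : Type*} [Field F] {k m : Type*} [Fintype k] [Fintype m]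

theorem exists_eq_sum_smul_vecMulVec (h2 : (2 : F) ≠ 0) {A : Matrix m m F} (hA : A.IsSymm) :
    ∃ (r : ℕ) (y g : Fin r → m → F),
      A = ∑ j, (y j ⬝ᵥ A *ᵥ y j) • vecMulVec (g j) (g j) := by
  classical
  have := invertibleOfNonzero h2
  have hsymm : LinearMap.IsSymm (toBilin' A) := ⟨fun x z => by
    simp only [toBilin'_apply', RingHom.id_apply]
    rw [← dotProduct_transpose_mulVec, hA]⟩
  obtain ⟨v, hv⟩ := LinearMap.BilinForm.exists_orthogonal_basis hsymm
  refine ⟨_, v, fun j i => v.repr (Pi.single i 1) j, ?_⟩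
  ext i l
  rw [← toBilin'_single A i l, ← LinearMap.BilinForm.sum_repr_mul_repr_mul v]
  simp only [Matrix.sum_apply]
  rw [Finsupp.sum_fintype _ _ (by simp)]
  refine Finset.sum_congr rfl fun j _ => ?_
  rw [Finsupp.sum_fintype _ _ (by simp), Finset.sum_eq_single j]
  · simp only [toBilin'_apply', smul_eq_mul, Matrix.smul_apply, vecMulVec_apply]
    ring
  · intro j' _ hj'
    simp [show toBilin' A (v j) (v j') = 0 from hv hj'.symm]
  · simp

lemma exists_dotProduct_mulVec_ne_zero (h2 : (2 : F) ≠ 0) {A : Matrix m m F} (hA : A.IsSymm)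
    (h0 : A ≠ 0) : ∃ x, x ⬝ᵥ A *ᵥ x ≠ 0 := by
  by_contra! h
  obtain ⟨r, y, g, hyg⟩ := exists_eq_sum_smul_vecMulVec h2 hA
  exact h0 (by simpa [h] using hyg)

theorem forall_trace_mul_transpose_mul_nonneg_iff (P : FieldOrdering F) {A : Matrix m m F}
    (hA : A.IsSymm) (B : Matrix k k F) :
    (∀ X : Matrix k m F, P.nonneg (A * Xᵀ * B * X).trace) ↔
      ∀ x y, P.nonneg ((x ⬝ᵥ A *ᵥ x) * (y ⬝ᵥ B *ᵥ y)) := by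
  constructor
  · intro h x y
    rw [← trace_mul_transpose_vecMulVec_mul]
    exact h _
  · intro h X
    obtain ⟨r, x, g, hxg⟩ := exists_eq_sum_smul_vecMulVec P.two_ne_zero hA
    have htrace : (A * Xᵀ * B * X).trace =
        ∑ j, (x j ⬝ᵥ A *ᵥ x j) * ((X *ᵥ g j) ⬝ᵥ B *ᵥ (X *ᵥ g j)) := by
      conv_lhs => rw [hxg]
      simp only [Matrix.sum_mul, Matrix.smul_mul, trace_sum, trace_smul,
        trace_vecMulVec_self_mul_transpose_mul, smul_eq_mul]
    rw [htrace]
    exact P.sum_nonneg fun j _ => h _ _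

end SymmetricMatrix

section SumOfCongruences

lemma exists_eq_sum_of_mem_closure_range {M α : Type*} [AddCommMonoid M] {f : α → M} {s : M}
    (hs : s ∈ AddSubmonoid.closure (Set.range f)) :
    ∃ (N : ℕ) (x : Fin N → α), s = ∑ i, f (x i) := by
  obtain ⟨l, hl, rfl⟩ := AddSubmonoid.exists_list_of_mem_closure hs
  obtain ⟨l, rfl⟩ : l ∈ Set.range (List.map f) := by rwa [Set.range_list_map]
  exact ⟨l.length, fun i => l[i], (Fin.sum_univ_fun_getElem l f).symm⟩

variable {F : Type*} [Field F] {k m : Type*} [Fintype k]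

lemma smul_vecMulVec_self_mem_closure_congruences {B : Matrix k k F} {v : k → F}
    (hv : v ⬝ᵥ B *ᵥ v ≠ 0) (g : m → F) {q : F} (hq : IsSumSq ((v ⬝ᵥ B *ᵥ v) * q)) :
    q • vecMulVec g g ∈
      AddSubmonoid.closure (Set.range fun X : Matrix k m F => Xᵀ * B * X) := by
  set c := v ⬝ᵥ B *ᵥ v with hc
  obtain ⟨p, rfl⟩ : ∃ p, q = p / c := ⟨c * q, by field_simp⟩
  rw [mul_div_cancel₀ _ hv] at hq
  induction hq with
  | zero => simp
  | sq_add a _ ih =>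
    rw [add_div, add_smul]
    refine add_mem (AddSubmonoid.subset_closure ⟨(a / c) • vecMulVec v g, ?_⟩) ih
    simp only [transpose_vecMulVec_mul_mul_vecMulVec, transpose_smul, Matrix.smul_mul,
      Matrix.mul_smul, smul_smul, ← hc]
    congr 1
    field_simp

theorem exists_eq_sum_congruences_of_isSumSq [Fintype m] (h2 : (2 : F) ≠ 0) {B : Matrix k k F}
    {v : k → F} (hv : v ⬝ᵥ B *ᵥ v ≠ 0) {S : Matrix m m F} (hS : S.IsSymm)
    (h : ∀ y, IsSumSq ((v ⬝ᵥ B *ᵥ v) * (y ⬝ᵥ S *ᵥ y))) :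
    ∃ (N : ℕ) (X : Fin N → Matrix k m F), S = ∑ i, (X i)ᵀ * B * X i := by
  obtain ⟨r, y, g, hyg⟩ := exists_eq_sum_smul_vecMulVec h2 hS
  apply exists_eq_sum_of_mem_closure_range (f := fun X : Matrix k m F => Xᵀ * B * X)
  rw [hyg]
  exact sum_mem fun j _ => smul_vecMulVec_self_mem_closure_congruences hv (g j) (h (y j))

end SumOfCongruences

section Definite

variable {F : Type*} [Field F]

lemma mulVec_eq_zero_of_nonneg_of_isotropic {m : Type*} [Fintype m] (P : FieldOrdering F)
    {A : Matrix m m F} (hA : A.IsSymm) (hnonneg : ∀ x, P.nonneg (x ⬝ᵥ A *ᵥ x)) {x : m → F}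
    (hx : x ⬝ᵥ A *ᵥ x = 0) : A *ᵥ x = 0 := by
  classical
  have h2 := P.two_ne_zero
  refine dotProduct_eq_zero _ fun y => ?_
  by_contra hy
  -- On the line `y + t x` the form is affine in `t`, so it takes the value `-1`.
  set t := -(y ⬝ᵥ A *ᵥ y + 1) / (2 * (A *ᵥ x ⬝ᵥ y)) with ht
  have hxy : x ⬝ᵥ A *ᵥ y = A *ᵥ x ⬝ᵥ y := by
    rw [← dotProduct_transpose_mulVec, hA, dotProduct_comm]
  have hvalue : (y + t • x) ⬝ᵥ A *ᵥ (y + t • x) = -1 := by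
    simp only [mulVec_add, mulVec_smul, add_dotProduct, dotProduct_add, smul_dotProduct,
      dotProduct_smul, smul_eq_mul, hx, hxy, dotProduct_comm y (A *ᵥ x), ht]
    field_simp
    ring
  exact P.not_neg_one_nonneg (hvalue ▸ hnonneg _)

variable {n : ℕ} {P : FieldOrdering F} {A : Matrix (Fin n) (Fin n) F}

lemma isPSDAt_of_isPDAt (h : A.IsPDAt P) : A.IsPSDAt P := fun x => by
  rcases eq_or_ne x 0 with rfl | hx
  · simpa using P.zero_nonneg
  · exact (h x hx).1

lemma isPDAt_of_isPSDAt (hA : A.IsSymm) (hdet : A.det ≠ 0) (h : A.IsPSDAt P) :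
    A.IsPDAt P := fun x hx =>
  ⟨h x, fun h0 =>
    hx (eq_zero_of_mulVec_eq_zero hdet (mulVec_eq_zero_of_nonneg_of_isotropic P hA h h0))⟩

lemma forall_mul_nonneg_iff_isPDAt_or_neg (hA : A.IsSymm) (hdet : A.det ≠ 0) :
    (∀ x y, P.nonneg ((x ⬝ᵥ A *ᵥ x) * (y ⬝ᵥ A *ᵥ y))) ↔ A.IsPDAt P ∨ (-A).IsPDAt P := by
  constructor
  · intro h
    by_cases hpsd : A.IsPSDAt P
    · exact .inl (isPDAt_of_isPSDAt hA hdet hpsd)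
    · obtain ⟨x, hx⟩ := not_forall.1 hpsd
      have hneg : (-A).IsPSDAt P := fun y => by
        simpa [neg_mulVec] using P.neg_nonneg_of_mul_nonneg hx (h x y)
      exact .inr (isPDAt_of_isPSDAt hA.neg (by simpa [det_neg] using hdet) hneg)
  · rintro (h | h) x y
    · exact P.mul_nonneg (isPSDAt_of_isPDAt h x) (isPSDAt_of_isPDAt h y)
    · simpa [neg_mulVec] using P.mul_nonneg (isPSDAt_of_isPDAt h x) (isPSDAt_of_isPDAt h y)

end Definite

section Involution

variable {R : Type*} [CommRing R] {m : Type*} [Fintype m] [DecidableEq m] {Φ : Matrix m m R}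

lemma dotProduct_inv_mulVec_mulVec (hΦ : IsUnit Φ.det) (x : m → R) :
    (Φ *ᵥ x) ⬝ᵥ Φ⁻¹ *ᵥ (Φ *ᵥ x) = x ⬝ᵥ Φ *ᵥ x := by
  rw [mulVec_mulVec, nonsing_inv_mul _ hΦ, one_mulVec, dotProduct_comm]

lemma involution_mul_self_conj (hΦ : IsUnit Φ.det) (X Y : Matrix m m R) :
    Φ * Yᵀ * Φ⁻¹ * (Φ * Xᵀ * Φ⁻¹ * X) * Y = Φ * (X * Y)ᵀ * Φ⁻¹ * (X * Y) := by
  simp only [transpose_mul, Matrix.mul_assoc, nonsing_inv_mul_cancel_left _ _ hΦ]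

lemma isSymm_inv_mul_of_involution_eq (hΦsym : Φ.IsSymm) (hΦ : IsUnit Φ.det) {U : Matrix m m R}
    (hU : Φ * Uᵀ * Φ⁻¹ = U) : (Φ⁻¹ * U).IsSymm := by
  rw [IsSymm, transpose_mul, transpose_nonsing_inv, hΦsym]
  conv_rhs => rw [← hU, Matrix.mul_assoc, nonsing_inv_mul_cancel_left _ _ hΦ]

variable {F : Type*} [Field F]

theorem forall_trace_involution_mul_nonneg_iff {n : ℕ} (P : FieldOrdering F)
    {Φ : Matrix (Fin n) (Fin n) F} (hΦsym : Φ.IsSymm) (hΦ : IsUnit Φ.det) :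
    (∀ X, P.nonneg (Φ * Xᵀ * Φ⁻¹ * X).trace) ↔ Φ.IsPDAt P ∨ (-Φ).IsPDAt P := by
  have hsurj : Function.Surjective Φ.mulVec :=
    mulVec_surjective_iff_isUnit.2 ((isUnit_iff_isUnit_det Φ).2 hΦ)
  rw [forall_trace_mul_transpose_mul_nonneg_iff P hΦsym,
    ← forall_mul_nonneg_iff_isPDAt_or_neg hΦsym hΦ.ne_zero]
  refine forall_congr' fun x => ?_
  rw [hsurj.forall]
  simp only [dotProduct_inv_mulVec_mulVec hΦ]

theorem exists_eq_sum_involution_mul_self (h2 : (2 : F) ≠ 0) {Φ : Matrix m m F} (hΦsym : Φ.IsSymm)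
    (hΦ : IsUnit Φ.det) {U : Matrix m m F} (hU : Φ * Uᵀ * Φ⁻¹ = U)
    (h : ∀ (P : FieldOrdering F) (X : Matrix m m F), P.nonneg (Φ * Xᵀ * Φ⁻¹ * U * X).trace) :
    ∃ (N : ℕ) (X : Fin N → Matrix m m F), U = ∑ i, Φ * (X i)ᵀ * Φ⁻¹ * X i := by
  rcases eq_or_ne Φ 0 with rfl | hΦ0
  · exact ⟨0, Fin.elim0, by simpa using hU.symm⟩
  obtain ⟨w, hw⟩ := exists_dotProduct_mulVec_ne_zero h2 hΦsym hΦ0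
  rw [← dotProduct_inv_mulVec_mulVec hΦ] at hw
  have hsumSq (y : m → F) :
      IsSumSq (((Φ *ᵥ w) ⬝ᵥ Φ⁻¹ *ᵥ (Φ *ᵥ w)) * (y ⬝ᵥ (Φ⁻¹ * U) *ᵥ y)) := by
    rw [dotProduct_inv_mulVec_mulVec hΦ]
    refine isSumSq_of_forall_nonneg h2 fun P =>
      (forall_trace_mul_transpose_mul_nonneg_iff P hΦsym (Φ⁻¹ * U)).1 (fun X => ?_) w y
    simpa only [Matrix.mul_assoc] using h P X
  obtain ⟨N, X, hX⟩ := exists_eq_sum_congruences_of_isSumSq h2 hw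
    (isSymm_inv_mul_of_involution_eq hΦsym hΦ hU) hsumSq
  refine ⟨N, X, ?_⟩
  calc U = Φ * (Φ⁻¹ * U) := (mul_nonsing_inv_cancel_left _ _ hΦ).symm
    _ = ∑ i, Φ * (X i)ᵀ * Φ⁻¹ * X i := by simp only [hX, Matrix.mul_sum, Matrix.mul_assoc]

end Involution

/-- Answer to the Procesi–Schacher question, split orthogonal case: property (PS') holds
for `(M_n(F), ad_Φ)` iff `Φ` is positive or negative definite at every ordering of `F`. -/
theorem stmt_11 {F : Type*} [Field F] (hF : (2 : F) ≠ 0) {n : ℕ}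
    (Φ : Matrix (Fin n) (Fin n) F) (hΦsym : Φᵀ = Φ) (hΦ : IsUnit Φ.det) :
    (∀ U : Matrix (Fin n) (Fin n) F, Φ * Uᵀ * Φ⁻¹ = U →
      ((∀ (P : FieldOrdering F) (X : Matrix (Fin n) (Fin n) F),
            P.nonneg ((Φ * Xᵀ * Φ⁻¹) * U * X).trace) ↔
        ∃ (N : ℕ) (X : Fin N → Matrix (Fin n) (Fin n) F),
          U = ∑ i, (Φ * (X i)ᵀ * Φ⁻¹) * X i)) ↔
      (∀ P : FieldOrdering F, Φ.IsPDAt P ∨ (-Φ).IsPDAt P) := by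
  constructor
  · intro h P
    have hone : Φ * (1 : Matrix (Fin n) (Fin n) F)ᵀ * Φ⁻¹ = 1 := by
      simp [mul_nonsing_inv _ hΦ]
    have hpos := (h 1 hone).2 ⟨1, fun _ => 1, by simp [mul_nonsing_inv _ hΦ]⟩ P
    exact (forall_trace_involution_mul_nonneg_iff P hΦsym hΦ).1 (by simpa using hpos)
  · intro hdef U hU
    refine ⟨exists_eq_sum_involution_mul_self hF hΦsym hΦ hU, ?_⟩
    rintro ⟨N, X, rfl⟩ P Y
    simp only [Matrix.mul_sum, Matrix.sum_mul, trace_sum, involution_mul_self_conj hΦ]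
    exact P.sum_nonneg fun i _ =>
      (forall_trace_involution_mul_nonneg_iff P hΦsym hΦ).2 (hdef P) (X i * Y)
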